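/- arXiv:2311.05940 — 2 statements merged into one kernel-verified Lean document; each statement's English description precedes it below -/
import Mathlib

section
/- Let C ≥ 0 and for each n ∈ ℕ let Q_n : [0,∞) → [0,C] be a nonincreasing function. Then there exists a strictly increasing map φ : ℕ → ℕ such that lim_{R→∞} limsup_{k→∞} ( Q_{φ(k)}(R) − Q_{φ(k)}(8R) ) = 0. -/
open Filter

/-!
By compactness of a product of intervals, some subsequence of `Q` converges at every natural number,
to a nonincreasing sequence `q` bounded below; such a `q` has a limit. The drop of `Q (φ k)` from
`R` to `8 * R` is at most its drop over the larger window from `⌊R⌋₊` to `⌈8 * R⌉₊`. As `k → ∞` the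
latter tends to `q ⌊R⌋₊ - q ⌈8 * R⌉₊`, and this tends to `0` as `R → ∞` because `q` is Cauchy. The
subsequence does not depend on the scale `8 * R`, so it serves every scale `s R ≥ R` at once.
-/

open Set Topology

theorem exists_strictMono_tendsto_antitone {ι β : Type*} [Countable ι] [Preorder ι]
    [Preorder β] [TopologicalSpace β] [OrderClosedTopology β] [CompactIccSpace β]
    [FirstCountableTopology β] {f : ℕ → ι → β} {a b : ι → β} (hf : ∀ n, Antitone (f n))
    (hmem : ∀ n i, f n i ∈ Icc (a i) (b i)) :
    ∃ φ : ℕ → ℕ, StrictMono φ ∧ ∃ g : ι → β, Antitone g ∧ (∀ i, g i ∈ Icc (a i) (b i)) ∧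
      ∀ i, Tendsto (fun k => f (φ k) i) atTop (𝓝 (g i)) := by
  have hcompact : IsCompact ({g : ι → β | Antitone g} ∩ univ.pi fun i => Icc (a i) (b i)) :=
    (isCompact_univ_pi fun _ => isCompact_Icc).inter_left isClosed_antitone
  obtain ⟨g, ⟨hg, hgmem⟩, φ, hφ, hlim⟩ :=
    hcompact.tendsto_subseq fun n => ⟨hf n, fun i _ => hmem n i⟩
  exact ⟨φ, hφ, g, hg, fun i => hgmem i trivial, tendsto_pi_nhds.1 hlim⟩

theorem limsup_mem_Icc_of_le_of_tendsto {κ β : Type*} [ConditionallyCompleteLinearOrder β]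
    [TopologicalSpace β] [OrderTopology β] {l : Filter κ} [l.NeBot] {u v : κ → β} {a b : β}
    (hau : ∀ᶠ k in l, a ≤ u k) (huv : u ≤ᶠ[l] v) (hv : Tendsto v l (𝓝 b)) :
    limsup u l ∈ Icc a b := by
  have hbdd : l.IsBoundedUnder (· ≤ ·) u := hv.isBoundedUnder_le.mono_le huv
  have hcobdd : l.IsCoboundedUnder (· ≤ ·) u :=
    (isBoundedUnder_of_eventually_ge hau).isCoboundedUnder_le
  refine ⟨le_limsup_of_frequently_le hau.frequently hbdd, ?_⟩
  calc limsup u l ≤ limsup v l := limsup_le_limsup huv hcobdd hv.isBoundedUnder_le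
    _ = b := hv.limsup_eq

theorem sub_le_sub_floor_ceil_of_antitoneOn {f : ℝ → ℝ} (hf : AntitoneOn f (Ici 0)) {x y : ℝ}
    (hx : 0 ≤ x) (hy : 0 ≤ y) : f x - f y ≤ f ⌊x⌋₊ - f ⌈y⌉₊ :=
  sub_le_sub (hf (mem_Ici.2 (Nat.cast_nonneg _)) hx (Nat.floor_le hx))
    (hf hy (mem_Ici.2 (Nat.cast_nonneg _)) (Nat.le_ceil y))

section LatticeLimit

variable {κ : Type*} {l : Filter κ} [l.NeBot] {Q : κ → ℝ → ℝ} {q : ℕ → ℝ}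

theorem limsup_sub_mem_Icc_of_antitoneOn (hanti : ∀ k, AntitoneOn (Q k) (Ici 0))
    (hQ : ∀ m : ℕ, Tendsto (fun k => Q k m) l (𝓝 (q m))) {x y : ℝ} (hx : 0 ≤ x) (hxy : x ≤ y) :
    limsup (fun k => Q k x - Q k y) l ∈ Icc 0 (q ⌊x⌋₊ - q ⌈y⌉₊) :=
  have hy : 0 ≤ y := hx.trans hxy
  limsup_mem_Icc_of_le_of_tendsto
    (.of_forall fun k => sub_nonneg.2 (hanti k hx hy hxy))
    (.of_forall fun k => sub_le_sub_floor_ceil_of_antitoneOn (hanti k) hx hy)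
    ((hQ ⌊x⌋₊).sub (hQ ⌈y⌉₊))

theorem tendsto_limsup_sub_of_antitoneOn (hanti : ∀ k, AntitoneOn (Q k) (Ici 0))
    (hQ : ∀ m : ℕ, Tendsto (fun k => Q k m) l (𝓝 (q m))) {L : ℝ} (hq : Tendsto q atTop (𝓝 L))
    {α : Type*} {p : Filter α} {r s : α → ℝ} (hr : Tendsto r p atTop) (hrs : r ≤ᶠ[p] s) :
    Tendsto (fun t => limsup (fun k => Q k (r t) - Q k (s t)) l) p (𝓝 0) := by
  have hs : Tendsto s p atTop := tendsto_atTop_mono' p hrs hr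
  have hdrop : Tendsto (fun t => q ⌊r t⌋₊ - q ⌈s t⌉₊) p (𝓝 0) := by
    simpa only [Function.comp_apply, sub_self] using (hq.comp (tendsto_nat_floor_atTop.comp hr)).sub
      (hq.comp (tendsto_nat_ceil_atTop.comp hs))
  have hmem : ∀ᶠ t in p,
      limsup (fun k => Q k (r t) - Q k (s t)) l ∈ Icc 0 (q ⌊r t⌋₊ - q ⌈s t⌉₊) := by
    filter_upwards [hr.eventually_ge_atTop 0, hrs] with t hrt hrst
    exact limsup_sub_mem_Icc_of_antitoneOn hanti hQ hrt hrst
  exact tendsto_of_tendsto_of_tendsto_of_le_of_le' tendsto_const_nhds hdrop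
    (hmem.mono fun _ ht => ht.1) (hmem.mono fun _ ht => ht.2)

end LatticeLimit

theorem helly_concentration_selection_general {a b : ℝ} {Q : ℕ → ℝ → ℝ}
    (hmem : ∀ n, ∀ R : ℝ, 0 ≤ R → Q n R ∈ Icc a b) (hanti : ∀ n, AntitoneOn (Q n) (Ici 0)) :
    ∃ φ : ℕ → ℕ, StrictMono φ ∧ ∀ s : ℝ → ℝ, (∀ᶠ R in atTop, R ≤ s R) →
      Tendsto (fun R : ℝ => limsup (fun k => Q (φ k) R - Q (φ k) (s R)) atTop) atTop (𝓝 0) := by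
  have hantiNat : ∀ n, Antitone fun m : ℕ => Q n m := fun n i j hij =>
    hanti n (mem_Ici.2 i.cast_nonneg) (mem_Ici.2 j.cast_nonneg) (Nat.cast_le.2 hij)
  obtain ⟨φ, hφ, q, hq, hqmem, hlim⟩ :=
    exists_strictMono_tendsto_antitone hantiNat fun n m => hmem n m m.cast_nonneg
  have hqbdd : BddBelow (range q) := ⟨a, forall_mem_range.2 fun m => (hqmem m).1⟩
  exact ⟨φ, hφ, fun s hs => tendsto_limsup_sub_of_antitoneOn (fun k => hanti (φ k)) hlim
    (tendsto_atTop_ciInf hq hqbdd) tendsto_id hs⟩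

/-- **Helly selection / concentration-function argument.** Given `C ≥ 0` and, for each `n`,
a nonincreasing function `Q_n : [0,∞) → [0,C]`, there is a subsequence `φ` along which
`limsup_k (Q_{φ(k)}(R) − Q_{φ(k)}(8R)) → 0` as `R → ∞`. -/
theorem helly_concentration_selection (C : ℝ) (hC : 0 ≤ C) (Q : ℕ → ℝ → ℝ)
    (hmem : ∀ n, ∀ R : ℝ, 0 ≤ R → Q n R ∈ Set.Icc 0 C)
    (hmono : ∀ n, ∀ R₁ R₂ : ℝ, 0 ≤ R₁ → R₁ ≤ R₂ → Q n R₂ ≤ Q n R₁) :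
    ∃ φ : ℕ → ℕ, StrictMono φ ∧
      Tendsto (fun R : ℝ => limsup (fun k => Q (φ k) R - Q (φ k) (8 * R)) atTop)
        atTop (nhds 0) := by
  obtain ⟨φ, hφ, h⟩ := helly_concentration_selection_general hmem
    fun n R₁ hR₁ R₂ _ hle => hmono n R₁ R₂ hR₁ hle
  exact ⟨φ, hφ, h (8 * ·) ((eventually_ge_atTop 0).mono fun R hR => by linarith)⟩
end

section
/- Let C ≥ 0 and for each n ∈ ℕ let Q_n : [0,∞) → [0,C] be a nonincreasing function. Then lim_{R→∞} liminf_{n→∞} ( Q_n(R) − Q_n(8R) ) = 0, i.e. for every ε > 0 there exists R₀ such that for all R ≥ R₀ one has liminf_{n→∞} ( Q_n(R) − Q_n(8R) ) < ε. -/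
open Filter

/-!
If, along arbitrarily large `x`, the drops `u i x - u i (σ x)` were eventually at least `δ > 0`,
one could choose `x₁ ≤ σ x₁ ≤ x₂ ≤ σ x₂ ≤ ⋯ ≤ x_K ≤ σ x_K` among these `x`. Only finitely many
conditions on `i` are involved, so a single `i` satisfies all of them, and by monotonicity `u i`
drops by at least `K δ` in total; for large `K` this exceeds any uniform bound on the total drop.
-/

section Drop

variable {ι α G : Type*} [Preorder α] [AddCommGroup G] {l : Filter ι} {u : ι → α → G}
  {σ : α → α} {a : α} {δ : G}

lemma exists_ge_eventually_nsmul_le_sub [PartialOrder G] [IsOrderedAddMonoid G]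
    (hu : ∀ i, AntitoneOn (u i) (Set.Ici a)) (hσ : ∀ x ≥ a, x ≤ σ x)
    (hδ : ∃ᶠ x in atTop, ∀ᶠ i in l, δ ≤ u i x - u i (σ x)) (K : ℕ) :
    ∃ x ≥ a, ∀ᶠ i in l, K • δ ≤ u i a - u i x := by
  induction K with
  | zero => exact ⟨a, le_rfl, by simp⟩
  | succ K ih =>
    obtain ⟨x, hax, hx⟩ := ih
    obtain ⟨y, hy, hxy⟩ := (hδ.and_eventually (eventually_ge_atTop x)).exists
    have hay : a ≤ y := hax.trans hxy
    refine ⟨σ y, hay.trans (hσ y hay), ?_⟩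
    filter_upwards [hx, hy] with i hix hiy
    calc (K + 1) • δ = K • δ + δ := succ_nsmul δ K
      _ ≤ (u i a - u i x) + (u i y - u i (σ y)) := add_le_add hix hiy
      _ ≤ (u i a - u i y) + (u i y - u i (σ y)) := by gcongr; exact hu i hax hay hxy
      _ = u i a - u i (σ y) := sub_add_sub_cancel _ _ _

lemma eventually_frequently_sub_lt [LinearOrder G] [IsOrderedAddMonoid G] [Archimedean G]
    [l.NeBot] {C : G} (hu : ∀ i, AntitoneOn (u i) (Set.Ici a))
    (hC : ∀ i, ∀ x ≥ a, u i a - u i x ≤ C) (hσ : ∀ x ≥ a, x ≤ σ x) (hδ : 0 < δ) :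
    ∀ᶠ x in atTop, ∃ᶠ i in l, u i x - u i (σ x) < δ := by
  by_contra hlarge
  simp only [not_eventually, not_frequently, not_lt] at hlarge
  obtain ⟨K, hK⟩ := exists_lt_nsmul hδ C
  obtain ⟨x, hax, hx⟩ := exists_ge_eventually_nsmul_le_sub hu hσ hlarge K
  obtain ⟨i, hi⟩ := hx.exists
  exact (hK.trans_le hi).not_ge (hC i x hax)

end Drop

theorem concentration_function_liminf_vanishes_general {ι α : Type*} [Preorder α]
    {l : Filter ι} [l.NeBot] {u : ι → α → ℝ} {σ : α → α} {a : α} {C : ℝ}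
    (hu : ∀ i, AntitoneOn (u i) (Set.Ici a)) (hC : ∀ i, ∀ x ≥ a, u i a - u i x ≤ C)
    (hσ : ∀ x ≥ a, x ≤ σ x) :
    Tendsto (fun x => liminf (fun i => u i x - u i (σ x)) l) atTop (nhds 0) := by
  have drop_nonneg : ∀ x ≥ a, ∀ i, 0 ≤ u i x - u i (σ x) := fun x hx i =>
    sub_nonneg.2 (hu i hx (hx.trans (hσ x hx)) (hσ x hx))
  have drop_le : ∀ x ≥ a, ∀ i, u i x - u i (σ x) ≤ C := fun x hx i =>
    (sub_le_sub_right (hu i Set.self_mem_Ici hx hx) _).trans (hC i _ (hx.trans (hσ x hx)))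
  refine tendsto_order.2 ⟨fun b hb => ?_, fun ε hε => ?_⟩
  · filter_upwards [eventually_ge_atTop a] with x hx
    have hbdd : IsBoundedUnder (· ≤ ·) l fun i => u i x - u i (σ x) :=
      isBoundedUnder_of ⟨C, drop_le x hx⟩
    exact hb.trans_le
      (le_liminf_of_le hbdd.isCoboundedUnder_ge (Eventually.of_forall (drop_nonneg x hx)))
  · filter_upwards [eventually_ge_atTop a,
      eventually_frequently_sub_lt (l := l) hu hC hσ (half_pos hε)] with x hx hsmall
    have hliminf : liminf (fun i => u i x - u i (σ x)) l ≤ ε / 2 :=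
      liminf_le_of_frequently_le (hsmall.mono fun _ => le_of_lt)
        (isBoundedUnder_of ⟨0, drop_nonneg x hx⟩)
    exact hliminf.trans_lt (half_lt_self hε)

/-- **Quantitative concentration-function argument.** Given `C ≥ 0` and, for each `n`, a
nonincreasing function `Q_n : [0,∞) → [0,C]`, one has
`lim_{R→∞} liminf_{n→∞} (Q_n(R) − Q_n(8R)) = 0`; i.e. for every `ε > 0` there is `R₀` such
that `liminf_{n→∞} (Q_n(R) − Q_n(8R)) < ε` for all `R ≥ R₀`. -/
theorem concentration_function_liminf_vanishes (C : ℝ) (hC : 0 ≤ C) (Q : ℕ → ℝ → ℝ)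
    (hmem : ∀ n, ∀ R : ℝ, 0 ≤ R → Q n R ∈ Set.Icc 0 C)
    (hmono : ∀ n, ∀ R₁ R₂ : ℝ, 0 ≤ R₁ → R₁ ≤ R₂ → Q n R₂ ≤ Q n R₁) :
    Tendsto (fun R : ℝ => liminf (fun n => Q n R - Q n (8 * R)) atTop) atTop (nhds 0) ∧
    ∀ ε > (0 : ℝ), ∃ R₀ : ℝ, ∀ R ≥ R₀,
      liminf (fun n => Q n R - Q n (8 * R)) atTop < ε := by
  have hlim : Tendsto (fun R : ℝ => liminf (fun n => Q n R - Q n (8 * R)) atTop) atTop (nhds 0) :=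
    concentration_function_liminf_vanishes_general (a := 0) (C := C)
      (fun n R₁ hR₁ R₂ _ hR => hmono n R₁ R₂ hR₁ hR)
      (fun n R hR => by linarith [(hmem n 0 le_rfl).2, (hmem n R hR).1])
      (fun R hR => by linarith)
  exact ⟨hlim, fun ε hε => eventually_atTop.1 (hlim.eventually_lt_const hε)⟩
end
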